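/- Let N be a positive integer, 0 ≤ α < 1/4, and let F̃ be the NUDFT matrix associated with a set of α-perturbed nodes x̃_{−N},…,x̃_N. Then for every vector c ∈ ℂ^{2N+1}, (1−φ_α)² ‖c‖₂² ≤ (1/(2N+1)) ‖F̃ c‖₂² ≤ (1+φ_α)² ‖c‖₂², where φ_α = 1 − cos(πα) + sin(πα). -/

import Mathlib

open Real Finset

/-!
Let `h = 2π / (2N+1)` and let `A` be the Fourier matrix of the equispaced nodes `j h`, so that
`Aᴴ * A = (2N+1) • 1`. As `F̃ j k = exp (-i δ j (h k)) * A j k`, the difference `F̃ - A` is the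
Hadamard product of `A` with `exp (-i δ j t) - 1` sampled at `t = h k ∈ [-π, π]`. Following Kadec,
expand `1 - cos (δ t)` in the functions `exp (i m t)`, and `i sin (δ t)` in the functions
`exp (i (m + 1/2) t)`, for `m ∈ ℤ`. Each term is a function of `j` times a unimodular function of
`k`, so it multiplies `A` by diagonal matrices on both sides, and its operator norm is at most the
coefficient for `δ = α` in absolute value. At `t = π` the terms of the expansion for `δ = α` all
have the same phase, so these absolute values add up to `1 - cos (πα)` and `sin (πα)`. Hence
`‖F̃ - A‖ ≤ φ_α ‖A‖`, and the claim follows from the triangle inequality.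
-/

/-! ### Fourier series -/

theorem hasSum_fourierCoeffOn_mul_fourier {a b : ℝ} (hab : a < b) {f : ℝ → ℂ}
    (hf : ContinuousOn f (Set.Icc a b)) (hends : f a = f b)
    (hsum : Summable (fourierCoeffOn hab f)) {x : ℝ} (hx : x ∈ Set.Icc a b) :
    HasSum (fun n => fourierCoeffOn hab f n * fourier n (x : AddCircle (b - a))) (f x) := by
  have : Fact (0 < b - a) := ⟨sub_pos.2 hab⟩
  have hb : a + (b - a) = b := add_sub_cancel a b
  let g : C(AddCircle (b - a), ℂ) :=
    ⟨AddCircle.liftIoc (b - a) a f, AddCircle.liftIoc_continuous (by rwa [hb]) (by rwa [hb])⟩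
  have lift_eq : g x = f x := by
    rcases hx.1.eq_or_lt with rfl | hax
    · calc g a = g b := by rw [← AddCircle.coe_add_period (b - a) a, hb]
        _ = f b := AddCircle.liftIoc_coe_apply ⟨hab, hb.ge⟩
        _ = f a := hends.symm
    · exact AddCircle.liftIoc_coe_apply ⟨hax, hx.2.trans hb.ge⟩
  rw [← lift_eq]
  exact has_pointwise_sum_fourier_series_of_summable (f := g) hsum x

theorem fourierCoeffOn_add {a b : ℝ} (hab : a < b) {f g : ℝ → ℂ}
    (hf : IntervalIntegrable f MeasureTheory.volume a b)
    (hg : IntervalIntegrable g MeasureTheory.volume a b) (n : ℤ) :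
    fourierCoeffOn hab (fun x => f x + g x) n =
      fourierCoeffOn hab f n + fourierCoeffOn hab g n := by
  have continuous_fourier : Continuous fun x : ℝ => fourier (-n) (x : AddCircle (b - a)) := by
    fun_prop
  simp_rw [fourierCoeffOn_eq_integral, smul_add,
    intervalIntegral.integral_add (hf.continuousOn_smul continuous_fourier.continuousOn)
      (hg.continuousOn_smul continuous_fourier.continuousOn), smul_add]

theorem integral_exp_ofReal_mul_I (ω r : ℝ) :
    ∫ x in -r..r, Complex.exp ((ω * x : ℝ) * Complex.I) = 2 * r * sinc (ω * r) := by
  rcases eq_or_ne ω 0 with rfl | hω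
  · simp [two_mul]
  · have hω' : (ω : ℂ) ≠ 0 := mod_cast hω
    rw [intervalIntegral.integral_comp_mul_left (fun x : ℝ => Complex.exp (x * Complex.I)) hω,
      mul_neg, integral_exp_mul_I_eq_sinc, Complex.real_smul]
    push_cast
    field_simp

theorem fourierCoeffOn_exp_mul_I (μ : ℝ) (n : ℤ) :
    fourierCoeffOn (neg_lt_self pi_pos) (fun x : ℝ => Complex.exp (μ * x * Complex.I)) n =
      sinc (π * (μ - n)) := by
  have integrand_eq (x : ℝ) :
      fourier (-n) (x : AddCircle (π - -π)) • Complex.exp (μ * x * Complex.I) =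
        Complex.exp (((μ - n) * x : ℝ) * Complex.I) := by
    rw [fourier_coe_apply, smul_eq_mul, ← Complex.exp_add]
    congr 1
    push_cast
    field_simp
    ring
  simp_rw [fourierCoeffOn_eq_integral, integrand_eq, integral_exp_ofReal_mul_I,
    Complex.real_smul, mul_comm π]
  push_cast
  field_simp
  norm_num

theorem hasSum_sinc_mul_exp {μ ν : ℝ} {a b : ℂ} {c : ℤ → ℂ}
    (hends : a * Complex.exp (μ * (-π) * Complex.I) + b * Complex.exp (ν * (-π) * Complex.I) =
      a * Complex.exp (μ * π * Complex.I) + b * Complex.exp (ν * π * Complex.I))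
    (hc : ∀ n, c n = a * sinc (π * (μ - n)) + b * sinc (π * (ν - n))) (hsum : Summable c)
    {x : ℝ} (hx : |x| ≤ π) :
    HasSum (fun n => c n * Complex.exp (n * x * Complex.I))
      (a * Complex.exp (μ * x * Complex.I) + b * Complex.exp (ν * x * Complex.I)) := by
  let f : ℝ → ℂ := fun x =>
    a * Complex.exp (μ * x * Complex.I) + b * Complex.exp (ν * x * Complex.I)
  have coeff_eq : fourierCoeffOn (neg_lt_self pi_pos) f = c := by
    ext n
    rw [fourierCoeffOn_add _ (Continuous.intervalIntegrable (by fun_prop) _ _)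
      (Continuous.intervalIntegrable (by fun_prop) _ _), fourierCoeffOn.const_mul,
      fourierCoeffOn.const_mul, fourierCoeffOn_exp_mul_I, fourierCoeffOn_exp_mul_I, hc]
  have fourier_eq (n : ℤ) :
      fourier n (x : AddCircle (π - -π)) = Complex.exp (n * x * Complex.I) := by
    rw [fourier_coe_apply]
    congr 1
    push_cast
    field_simp
    ring
  have series := hasSum_fourierCoeffOn_mul_fourier (neg_lt_self pi_pos) (f := f) (by fun_prop)
    (by simpa [f] using hends) (by rwa [coeff_eq]) (abs_le.1 hx)
  simpa only [coeff_eq, fourier_eq] using series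

/-! ### The coefficients in Kadec's expansions -/

/-- `(-1) ^ m` times the `m`-th Fourier coefficient of `x ↦ 1 - cos (δ * x)` on `[-π, π]`, for
`|δ| < 1`. The sign makes the weights nonnegative when `0 ≤ δ ≤ 1 / 2`. -/
noncomputable def kadecCosWeight (δ : ℝ) (m : ℤ) : ℝ :=
  if m = 0 then 1 - sinc (π * δ) else δ * sin (π * δ) / (π * (m ^ 2 - δ ^ 2))

/-- `(-1) ^ m` times the coefficient of `exp (i * (m + 1 / 2) * x)` in the expansion of
`i * sin (δ * x)` on `[-π, π]`, for `|δ| < 1 / 2`. The half-integer frequencies form the orthonormal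
basis adapted to antiperiodic functions; the sign makes the weights nonnegative for
`0 ≤ δ < 1 / 2`. -/
noncomputable def kadecSinWeight (δ : ℝ) (m : ℤ) : ℝ :=
  δ * cos (π * δ) / (π * ((m + 1 / 2) ^ 2 - δ ^ 2))

theorem summable_inv_int_add_sq_sub_sq (τ δ : ℝ) :
    Summable fun m : ℤ => ((m + τ) ^ 2 - δ ^ 2)⁻¹ := by
  have factor_isBigO (z : ℝ) :
      (fun m : ℤ => (m + z)⁻¹) =O[Filter.cofinite] fun m => (m : ℝ)⁻¹ := by
    refine Asymptotics.IsBigO.of_norm_left ?_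
    refine (EisensteinSeries.linear_inv_isBigO_right 1 (z : ℂ)).norm_left.congr_left fun m => ?_
    rw [← Complex.norm_real, Int.cast_one, one_mul, add_comm]
    push_cast
    rfl
  have majorant : Summable fun m : ℤ => (m : ℝ)⁻¹ * (m : ℝ)⁻¹ := by
    simpa [pow_two] using Real.summable_one_div_int_pow.2 one_lt_two
  have product_isBigO := (factor_isBigO (τ - δ)).mul (factor_isBigO (τ + δ))
  refine summable_of_isBigO majorant (product_isBigO.congr_left fun m => ?_)
  rw [← mul_inv]
  ring

theorem summable_kadecCosWeight (δ : ℝ) : Summable (kadecCosWeight δ) := by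
  have htail : Summable fun m : ℤ => δ * sin (π * δ) / π * ((m + 0) ^ 2 - δ ^ 2)⁻¹ :=
    (summable_inv_int_add_sq_sub_sq 0 δ).mul_left _
  refine htail.congr_cofinite ?_
  filter_upwards [Filter.eventually_cofinite_ne 0] with m hm
  rw [kadecCosWeight, if_neg hm, add_zero, div_mul_eq_div_div, div_eq_mul_inv _ (_ - _)]

theorem summable_kadecSinWeight (δ : ℝ) : Summable (kadecSinWeight δ) := by
  have hscaled := (summable_inv_int_add_sq_sub_sq (1 / 2) δ).mul_left (δ * cos (π * δ) / π)
  refine hscaled.congr fun m => ?_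
  rw [kadecSinWeight, div_mul_eq_div_div, div_eq_mul_inv _ (_ - _)]

theorem sinc_pi_mul_sub_int {μ : ℝ} {n : ℤ} (h : μ ≠ n) :
    sinc (π * (μ - n)) = (-1) ^ n * sin (π * μ) / (π * (μ - n)) := by
  rw [sinc_of_ne_zero (mul_ne_zero pi_ne_zero (sub_ne_zero.2 h)), mul_sub, mul_comm π (n : ℝ),
    sin_sub_int_mul_pi]

theorem sinc_pi_mul_sub_half_sub_int {μ : ℝ} {n : ℤ} (h : μ ≠ n + 1 / 2) :
    sinc (π * (μ - 1 / 2 - n)) = -((-1) ^ n * cos (π * μ)) / (π * (μ - (n + 1 / 2))) := by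
  have hne : μ - 1 / 2 ≠ n := fun h' => h (sub_eq_iff_eq_add.1 h')
  have hsin : sin (π * (μ - 1 / 2)) = -cos (π * μ) := by
    rw [← sin_sub_pi_div_two]
    ring_nf
  rw [sinc_pi_mul_sub_int hne, hsin]
  ring

theorem half_le_abs_int_add_half (m : ℤ) : 1 / 2 ≤ |(m : ℝ) + 1 / 2| := by
  rcases le_or_gt 0 m with hm | hm
  · have : (0 : ℝ) ≤ m := mod_cast hm
    exact le_abs.2 (.inl (by linarith))
  · have : (m : ℝ) ≤ -1 := mod_cast Int.le_sub_one_of_lt hm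
    exact le_abs.2 (.inr (by linarith))

theorem sinc_add_sinc_div_two_eq {δ : ℝ} (hδ : |δ| < 1) (n : ℤ) :
    (sinc (π * (δ - n)) + sinc (π * (-δ - n))) / 2 =
      (if n = 0 then 1 else 0) - (-1) ^ n * kadecCosWeight δ n := by
  rcases eq_or_ne n 0 with rfl | hn
  · simp [kadecCosWeight]
  have hδn : |δ| < |(n : ℝ)| := hδ.trans_le (mod_cast Int.one_le_abs hn)
  have hne : δ ≠ n := ne_of_apply_ne abs hδn.ne
  have hne' : -δ ≠ n := ne_of_apply_ne abs ((abs_neg δ).trans_ne hδn.ne)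
  have hsq : (n : ℝ) ^ 2 - δ ^ 2 ≠ 0 := sub_ne_zero.2 (sq_lt_sq.2 hδn).ne'
  rw [sinc_pi_mul_sub_int hne, sinc_pi_mul_sub_int hne', kadecCosWeight, if_neg hn, if_neg hn,
    mul_neg, sin_neg]
  field_simp [sub_ne_zero.2 hne, sub_ne_zero.2 hne']
  ring

theorem sinc_sub_sinc_div_two_eq {δ : ℝ} (hδ : |δ| < 1 / 2) (n : ℤ) :
    (sinc (π * (δ - 1 / 2 - n)) - sinc (π * (-δ - 1 / 2 - n))) / 2 =
      (-1) ^ n * kadecSinWeight δ n := by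
  have hδn : |δ| < |(n : ℝ) + 1 / 2| := hδ.trans_le (half_le_abs_int_add_half n)
  have hne : δ ≠ n + 1 / 2 := ne_of_apply_ne abs hδn.ne
  have hne' : -δ ≠ n + 1 / 2 := ne_of_apply_ne abs ((abs_neg δ).trans_ne hδn.ne)
  rw [sinc_pi_mul_sub_half_sub_int hne, sinc_pi_mul_sub_half_sub_int hne', kadecSinWeight,
    mul_neg π δ, cos_neg]
  generalize (n : ℝ) + 1 / 2 = t at *
  have hsq : t ^ 2 - δ ^ 2 ≠ 0 := sub_ne_zero.2 (sq_lt_sq.2 hδn).ne'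
  field_simp [sub_ne_zero.2 hne, sub_ne_zero.2 hne']
  ring

theorem summable_neg_one_zpow_mul {w : ℤ → ℝ} (hw : Summable w) :
    Summable fun n => ((-1) ^ n * w n : ℂ) :=
  .of_norm (by simpa using hw.norm)

theorem hasSum_kadecCosWeight_mul_exp {δ : ℝ} (hδ : |δ| < 1) {x : ℝ} (hx : |x| ≤ π) :
    HasSum (fun m : ℤ => ((-1) ^ m * kadecCosWeight δ m : ℂ) * Complex.exp (m * x * Complex.I))
      (1 - Complex.cos (δ * x)) := by
  have coeff_eq (m : ℤ) : (if m = 0 then 1 else 0) - (-1) ^ m * kadecCosWeight δ m =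
      (1 / 2 * sinc (π * (δ - m)) + 1 / 2 * sinc (π * ((-δ : ℝ) - m)) : ℂ) := by
    have := congrArg Complex.ofReal (sinc_add_sinc_div_two_eq hδ m)
    push_cast [apply_ite Complex.ofReal] at this
    rw [← this]
    ring
  have hasSum_one :
      HasSum (fun m : ℤ => (if m = 0 then 1 else 0) * Complex.exp (m * x * Complex.I)) 1 :=
    (hasSum_ite_eq (0 : ℤ) (1 : ℂ)).congr_fun fun m => by split_ifs with hm <;> simp [hm]
  have hasSum_cos := hasSum_sinc_mul_exp (by push_cast; ring_nf) coeff_eq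
    ((hasSum_ite_eq (0 : ℤ) (1 : ℂ)).summable.sub
      (summable_neg_one_zpow_mul (summable_kadecCosWeight δ))) hx
  have cos_eq : Complex.cos (δ * x) = 1 / 2 * Complex.exp (δ * x * Complex.I) +
      1 / 2 * Complex.exp ((-δ : ℝ) * x * Complex.I) := by
    rw [Complex.cos]
    push_cast
    ring_nf
  rw [cos_eq]
  refine (hasSum_one.sub hasSum_cos).congr_fun fun m => ?_
  ring

-- Unlike `i sin (δ x)`, the product `i sin (δ x) exp (-i x / 2)` takes equal values at `±π`, so its
-- Fourier series converges on all of `[-π, π]`.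
theorem hasSum_kadecSinWeight_mul_exp {δ : ℝ} (hδ : |δ| < 1 / 2) {x : ℝ} (hx : |x| ≤ π) :
    HasSum (fun m : ℤ => ((-1) ^ m * kadecSinWeight δ m : ℂ) *
      Complex.exp ((m + 1 / 2) * x * Complex.I)) (Complex.I * Complex.sin (δ * x)) := by
  have coeff_eq (m : ℤ) : ((-1) ^ m * kadecSinWeight δ m : ℂ) =
      1 / 2 * sinc (π * ((δ - 1 / 2 : ℝ) - m)) + -1 / 2 * sinc (π * ((-δ - 1 / 2 : ℝ) - m)) := by
    have := congrArg Complex.ofReal (sinc_sub_sinc_div_two_eq hδ m)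
    push_cast at this
    rw [← this]
    ring
  have exp_shift (ε : ℝ) (y : ℂ) : Complex.exp ((ε - 1 / 2 : ℝ) * y * Complex.I) =
      Complex.exp (ε * y * Complex.I) * Complex.exp (-y / 2 * Complex.I) := by
    rw [← Complex.exp_add]
    push_cast
    ring_nf
  have hasSum_shifted := hasSum_sinc_mul_exp (by
      simp only [exp_shift, neg_neg, Complex.exp_pi_div_two_mul_I,
        Complex.exp_neg_pi_div_two_mul_I]
      push_cast
      ring_nf) coeff_eq (summable_neg_one_zpow_mul (summable_kadecSinWeight δ)) hx
  have sin_eq : Complex.I * Complex.sin (δ * x) = Complex.exp (x / 2 * Complex.I) *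
      (1 / 2 * Complex.exp ((δ - 1 / 2 : ℝ) * x * Complex.I) +
        -1 / 2 * Complex.exp ((-δ - 1 / 2 : ℝ) * x * Complex.I)) := by
    have exp_cancel : Complex.exp (x / 2 * Complex.I) * Complex.exp (-x / 2 * Complex.I) = 1 := by
      rw [← Complex.exp_add, ← add_mul, ← add_div, add_neg_cancel, zero_div, zero_mul,
        Complex.exp_zero]
    rw [exp_shift, exp_shift, Complex.sin, ← neg_mul, Complex.ofReal_neg]
    linear_combination ((Complex.exp (-δ * x * Complex.I) -
      Complex.exp (δ * x * Complex.I)) / 2) * (exp_cancel + Complex.I_sq)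
  rw [sin_eq]
  refine (hasSum_shifted.mul_left _).congr_fun fun m => ?_
  rw [mul_left_comm, ← Complex.exp_add]
  ring_nf

theorem exp_int_mul_pi_mul_I (m : ℤ) : Complex.exp (m * π * Complex.I) = (-1) ^ m := by
  rw [mul_assoc, Complex.exp_int_mul, Complex.exp_pi_mul_I]

theorem neg_one_zpow_mul_self {K : Type*} [Field K] (m : ℤ) : ((-1) ^ m * (-1) ^ m : K) = 1 := by
  simp [← mul_zpow]

theorem hasSum_kadecCosWeight {δ : ℝ} (hδ : |δ| < 1) :
    HasSum (kadecCosWeight δ) (1 - cos (π * δ)) := by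
  rw [← Complex.hasSum_ofReal]
  push_cast
  rw [mul_comm (π : ℂ)]
  refine (hasSum_kadecCosWeight_mul_exp hδ (abs_of_pos pi_pos).le).congr_fun fun m => ?_
  rw [exp_int_mul_pi_mul_I]
  linear_combination -kadecCosWeight δ m * neg_one_zpow_mul_self (K := ℂ) m

theorem hasSum_kadecSinWeight {δ : ℝ} (hδ : |δ| < 1 / 2) :
    HasSum (kadecSinWeight δ) (sin (π * δ)) := by
  rw [← Complex.hasSum_ofReal, ← hasSum_mul_left_iff Complex.I_ne_zero]
  push_cast
  rw [mul_comm (π : ℂ)]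
  refine (hasSum_kadecSinWeight_mul_exp hδ (abs_of_pos pi_pos).le).congr_fun fun m => ?_
  have exp_eq : Complex.exp ((m + 1 / 2) * π * Complex.I) = (-1) ^ m * Complex.I := by
    rw [add_mul, add_mul, Complex.exp_add, exp_int_mul_pi_mul_I, one_div_mul_eq_div,
      Complex.exp_pi_div_two_mul_I]
  rw [exp_eq]
  linear_combination -(Complex.I * kadecSinWeight δ m) * neg_one_zpow_mul_self (K := ℂ) m

/-! ### Monotonicity of the coefficients -/

theorem antitoneOn_sinc_Icc : AntitoneOn sinc (Set.Icc 0 π) := by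
  intro x hx y hy hxy
  rcases hx.1.eq_or_lt with rfl | hx0
  · simpa using sinc_le_one y
  have hy0 := hx0.trans_le hxy
  have chord : x / y * sin y ≤ sin x := by
    have := strictConcaveOn_sin_Icc.concaveOn.2 ⟨le_rfl, pi_pos.le⟩ hy
      (sub_nonneg.2 ((div_le_one hy0).2 hxy)) (div_nonneg hx0.le hy0.le) (sub_add_cancel 1 (x / y))
    simpa [div_mul_cancel₀ x hy0.ne'] using this
  rw [sinc_of_ne_zero hx0.ne', sinc_of_ne_zero hy0.ne', le_div_iff₀ hx0]
  calc sin y / y * x = x / y * sin y := by ring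
    _ ≤ sin x := chord

theorem sin_le_cos_of_le_pi_div_four {x : ℝ} (hx0 : 0 ≤ x) (hx : x ≤ π / 4) :
    sin x ≤ cos x := by
  rw [← sin_pi_div_two_sub]
  exact sin_le_sin_of_le_of_le_pi_div_two (by linarith [pi_pos]) (by linarith) (by linarith)

theorem abs_mul_sin_pi_mul_le {δ α : ℝ} (hδ : |δ| ≤ α) (hα : α ≤ 1 / 2) :
    |δ * sin (π * δ)| ≤ α * sin (π * α) := by
  have hπδ : |π * δ| ≤ π * α := by
    rw [abs_mul, abs_of_pos pi_pos]
    gcongr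
  have hπα : π * α ≤ π / 2 := by nlinarith [pi_pos]
  rw [abs_mul, abs_sin_eq_sin_abs_of_abs_le_pi (by linarith [pi_pos])]
  gcongr
  · exact sin_nonneg_of_nonneg_of_le_pi (abs_nonneg _) (by linarith [pi_pos])
  · exact (abs_nonneg δ).trans hδ
  · exact sin_le_sin_of_le_of_le_pi_div_two (by linarith [pi_pos, abs_nonneg (π * δ)]) hπα hπδ

theorem monotoneOn_mul_cos_pi_mul :
    MonotoneOn (fun δ : ℝ => δ * cos (π * δ)) (Set.Icc 0 (1 / 4)) := by
  have hasDerivAt (x : ℝ) :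
      HasDerivAt (fun δ : ℝ => δ * cos (π * δ)) (cos (π * x) - π * x * sin (π * x)) x := by
    refine ((hasDerivAt_id x).mul ((hasDerivAt_id x).const_mul π).cos).congr_deriv ?_
    simp only [id_eq, one_mul, mul_one]
    ring
  refine monotoneOn_of_hasDerivWithinAt_nonneg (convex_Icc _ _) (by fun_prop)
    (fun x _ => (hasDerivAt x).hasDerivWithinAt) fun x hx => ?_
  rw [interior_Icc] at hx
  have hπx0 : 0 ≤ π * x := mul_nonneg pi_pos.le hx.1.le
  have hπx : π * x ≤ π / 4 := by nlinarith [pi_pos, hx.2]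
  refine sub_nonneg.2 ?_
  calc π * x * sin (π * x) ≤ 1 * cos (π * x) := by
        gcongr
        · exact sin_nonneg_of_nonneg_of_le_pi hπx0 (by linarith [pi_pos])
        · linarith [pi_le_four]
        · exact sin_le_cos_of_le_pi_div_four hπx0 hπx
    _ = cos (π * x) := one_mul _

theorem abs_mul_cos_pi_mul_le {δ α : ℝ} (hδ : |δ| ≤ α) (hα : α ≤ 1 / 4) :
    |δ * cos (π * δ)| ≤ α * cos (π * α) := by
  have hmono : |δ| * cos (π * |δ|) ≤ α * cos (π * α) :=
    monotoneOn_mul_cos_pi_mul ⟨abs_nonneg δ, hδ.trans hα⟩ ⟨(abs_nonneg δ).trans hδ, hα⟩ hδ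
  have hπδ : |π * δ| ≤ π / 4 := by
    rw [abs_mul, abs_of_pos pi_pos]
    nlinarith [pi_pos]
  have hcos : 0 ≤ cos (π * δ) := by
    rw [← cos_abs]
    exact cos_nonneg_of_neg_pi_div_two_le_of_le (by linarith [pi_pos, abs_nonneg (π * δ)])
      (by linarith [pi_pos])
  rwa [abs_mul, abs_of_nonneg hcos, ← cos_abs, abs_mul, abs_of_pos pi_pos]

theorem abs_div_pi_mul_sub_sq_le {x y q δ α : ℝ} (hxy : |x| ≤ y) (hδ : |δ| ≤ α)
    (hα : α ^ 2 < q) : |x / (π * (q - δ ^ 2))| ≤ y / (π * (q - α ^ 2)) := by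
  have hsq : δ ^ 2 ≤ α ^ 2 := sq_le_sq' (abs_le.1 hδ).1 (abs_le.1 hδ).2
  have hα' : 0 < q - α ^ 2 := sub_pos.2 hα
  rw [abs_div, abs_of_pos (mul_pos pi_pos (hα'.trans_le (by gcongr)))]
  gcongr
  exact (abs_nonneg x).trans hxy

theorem abs_kadecCosWeight_le {δ α : ℝ} (hδ : |δ| ≤ α) (hα : α ≤ 1 / 2) (m : ℤ) :
    |kadecCosWeight δ m| ≤ kadecCosWeight α m := by
  have hα0 : 0 ≤ α := (abs_nonneg δ).trans hδ
  rcases eq_or_ne m 0 with rfl | hm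
  · have sinc_abs : sinc (π * |δ|) = sinc (π * δ) := by
      rcases abs_choice δ with h | h <;> simp [h]
    have sinc_le : sinc (π * α) ≤ sinc (π * δ) := by
      rw [← sinc_abs]
      exact antitoneOn_sinc_Icc ⟨by positivity, by nlinarith [pi_pos]⟩
        ⟨by positivity, by nlinarith [pi_pos]⟩ (by gcongr)
    simp only [kadecCosWeight, if_true, abs_of_nonneg (sub_nonneg.2 (sinc_le_one _))]
    gcongr
  · have hm_sq : (1 : ℝ) ≤ m ^ 2 := by
      exact_mod_cast (one_le_sq_iff_one_le_abs m).2 (Int.one_le_abs hm)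
    simpa [kadecCosWeight, hm] using
      abs_div_pi_mul_sub_sq_le (abs_mul_sin_pi_mul_le hδ hα) hδ (by nlinarith)

theorem abs_kadecSinWeight_le {δ α : ℝ} (hδ : |δ| ≤ α) (hα : α ≤ 1 / 4) (m : ℤ) :
    |kadecSinWeight δ m| ≤ kadecSinWeight α m := by
  refine abs_div_pi_mul_sub_sq_le (abs_mul_cos_pi_mul_le hδ hα) hδ (sq_lt_sq.2 ?_)
  rw [abs_of_nonneg ((abs_nonneg δ).trans hδ)]
  linarith [half_le_abs_int_add_half m]

/-- The constant `φ_α` of the frame inequalities. -/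
noncomputable def kadecConstant (α : ℝ) : ℝ :=
  1 - cos (π * α) + sin (π * α)

theorem kadecConstant_nonneg {α : ℝ} (hα0 : 0 ≤ α) (hα : α ≤ 1) : 0 ≤ kadecConstant α :=
  add_nonneg (sub_nonneg.2 (cos_le_one _))
    (sin_nonneg_of_nonneg_of_le_pi (by positivity) (by nlinarith [pi_pos]))

theorem kadecConstant_le_one {α : ℝ} (hα0 : 0 ≤ α) (hα : α ≤ 1 / 4) : kadecConstant α ≤ 1 := by
  have : sin (π * α) ≤ cos (π * α) :=
    sin_le_cos_of_le_pi_div_four (by positivity) (by nlinarith [pi_pos])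
  rw [kadecConstant]
  linarith

/-! ### Hadamard products with separable series -/

section HadamardProduct

open scoped Matrix Matrix.Norms.L2Operator

variable {m n : Type*} [Fintype m] [Fintype n] [DecidableEq n]

theorem norm_hadamard_le_of_hasSum {ι 𝕜 : Type*} [RCLike 𝕜] {M : Matrix m n 𝕜} {u : ι → m → 𝕜}
    {v : ι → n → 𝕜} {w : ι → ℝ} {W : ℝ} (hM : ∀ j k, HasSum (fun i => u i j * v i k) (M j k))
    (hu : ∀ i, ‖u i‖ ≤ w i) (hv : ∀ i, ‖v i‖ ≤ 1) (hw : HasSum w W) (A : Matrix m n 𝕜) :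
    ‖M ⊙ A‖ ≤ W * ‖A‖ := by
  classical
  have expansion :
      HasSum (fun i => Matrix.diagonal (u i) * A * Matrix.diagonal (v i)) (M ⊙ A) := by
    refine Pi.hasSum.2 fun j => Pi.hasSum.2 fun k => ?_
    simpa [mul_right_comm] using (hM j k).mul_right (A j k)
  refine expansion.norm_le_of_bounded (hw.mul_right ‖A‖) fun i => ?_
  calc ‖Matrix.diagonal (u i) * A * Matrix.diagonal (v i)‖
      ≤ ‖Matrix.diagonal (u i)‖ * ‖A‖ * ‖Matrix.diagonal (v i)‖ := by
        grw [Matrix.l2_opNorm_mul, Matrix.l2_opNorm_mul]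
    _ ≤ w i * ‖A‖ * 1 := by
        rw [Matrix.l2_opNorm_diagonal, Matrix.l2_opNorm_diagonal]
        have : 0 ≤ w i := (norm_nonneg (u i)).trans (hu i)
        gcongr
        exacts [hu i, hv i]
    _ = w i * ‖A‖ := mul_one _

variable {δ : m → ℝ} {x : n → ℝ} {α : ℝ}

theorem norm_one_sub_cos_hadamard_le (hα0 : 0 ≤ α) (hα : α ≤ 1 / 2) (hδ : ∀ j, |δ j| ≤ α)
    (hx : ∀ k, |x k| ≤ π) (A : Matrix m n ℂ) :
    ‖Matrix.of (fun j k => 1 - Complex.cos (δ j * x k)) ⊙ A‖ ≤ (1 - cos (π * α)) * ‖A‖ := by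
  have weight_nonneg (i : ℤ) : 0 ≤ kadecCosWeight α i :=
    (abs_nonneg _).trans (abs_kadecCosWeight_le (abs_of_nonneg hα0).le hα i)
  refine norm_hadamard_le_of_hasSum
    (u := fun (i : ℤ) j => ((-1) ^ i * kadecCosWeight (δ j) i : ℂ))
    (v := fun (i : ℤ) k => Complex.exp (i * x k * Complex.I))
    (fun j k => hasSum_kadecCosWeight_mul_exp ((hδ j).trans_lt (by linarith)) (hx k))
    (fun i => (pi_norm_le_iff_of_nonneg (weight_nonneg i)).2 fun j => ?_)
    (fun i => (pi_norm_le_iff_of_nonneg zero_le_one).2 fun k => ?_)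
    (hasSum_kadecCosWeight (by rw [abs_of_nonneg hα0]; linarith)) A
  · simpa using abs_kadecCosWeight_le (hδ j) hα i
  · simpa using (Complex.norm_exp_ofReal_mul_I (i * x k)).le

theorem norm_I_mul_sin_hadamard_le (hα0 : 0 ≤ α) (hα : α ≤ 1 / 4) (hδ : ∀ j, |δ j| ≤ α)
    (hx : ∀ k, |x k| ≤ π) (A : Matrix m n ℂ) :
    ‖Matrix.of (fun j k => Complex.I * Complex.sin (δ j * x k)) ⊙ A‖ ≤ sin (π * α) * ‖A‖ := by
  have weight_nonneg (i : ℤ) : 0 ≤ kadecSinWeight α i :=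
    (abs_nonneg _).trans (abs_kadecSinWeight_le (abs_of_nonneg hα0).le hα i)
  refine norm_hadamard_le_of_hasSum
    (u := fun (i : ℤ) j => ((-1) ^ i * kadecSinWeight (δ j) i : ℂ))
    (v := fun (i : ℤ) k => Complex.exp ((i + 1 / 2) * x k * Complex.I))
    (fun j k => hasSum_kadecSinWeight_mul_exp ((hδ j).trans_lt (by linarith)) (hx k))
    (fun i => (pi_norm_le_iff_of_nonneg (weight_nonneg i)).2 fun j => ?_)
    (fun i => (pi_norm_le_iff_of_nonneg zero_le_one).2 fun k => ?_)
    (hasSum_kadecSinWeight (by rw [abs_of_nonneg hα0]; linarith)) A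
  · simpa using abs_kadecSinWeight_le (hδ j) hα i
  · simpa using (Complex.norm_exp_ofReal_mul_I ((i + 1 / 2) * x k)).le

theorem norm_exp_sub_one_hadamard_le (hα0 : 0 ≤ α) (hα : α ≤ 1 / 4) (hδ : ∀ j, |δ j| ≤ α)
    (hx : ∀ k, |x k| ≤ π) (A : Matrix m n ℂ) :
    ‖Matrix.of (fun j k => Complex.exp (δ j * x k * Complex.I) - 1) ⊙ A‖ ≤
      kadecConstant α * ‖A‖ := by
  have split : Matrix.of (fun j k => Complex.exp (δ j * x k * Complex.I) - 1) ⊙ A =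
      Matrix.of (fun j k => Complex.I * Complex.sin (δ j * x k)) ⊙ A -
        Matrix.of (fun j k => 1 - Complex.cos (δ j * x k)) ⊙ A := by
    ext j k
    simp only [Matrix.hadamard_apply, Matrix.of_apply, Matrix.sub_apply, Complex.exp_mul_I]
    ring
  calc ‖Matrix.of (fun j k => Complex.exp (δ j * x k * Complex.I) - 1) ⊙ A‖
      ≤ ‖Matrix.of (fun j k => Complex.I * Complex.sin (δ j * x k)) ⊙ A‖ +
        ‖Matrix.of (fun j k => 1 - Complex.cos (δ j * x k)) ⊙ A‖ := by
        rw [split]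
        exact norm_sub_le _ _
    _ ≤ sin (π * α) * ‖A‖ + (1 - cos (π * α)) * ‖A‖ :=
        add_le_add (norm_I_mul_sin_hadamard_le hα0 hα hδ hx A)
          (norm_one_sub_cos_hadamard_le hα0 (by linarith) hδ hx A)
    _ = kadecConstant α * ‖A‖ := by
        rw [kadecConstant]
        ring

end HadamardProduct

/-! ### Perturbation of the Fourier matrix -/

/-- The nonuniform discrete Fourier transform matrix with nodes `x` and frequencies `y`. -/
noncomputable def nudftMatrix {m n : Type*} (x : m → ℝ) (y : n → ℝ) : Matrix m n ℂ :=
  Matrix.of fun j k => Complex.exp (-Complex.I * x j * y k)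

theorem sum_div_pow_of_isPrimitiveRoot {K : Type*} [Field K] {L : ℕ} {ζ : K}
    (hζ : IsPrimitiveRoot ζ L) (k l : Fin L) :
    ∑ j : Fin L, (ζ ^ (k : ℕ) / ζ ^ (l : ℕ)) ^ (j : ℕ) = if k = l then (L : K) else 0 := by
  have hζ0 : ζ ≠ 0 := hζ.ne_zero k.pos.ne'
  rw [Fin.sum_univ_eq_sum_range (fun j => (ζ ^ (k : ℕ) / ζ ^ (l : ℕ)) ^ j)]
  split_ifs with hkl
  · simp [hkl, hζ0]
  · have hne : ζ ^ (k : ℕ) / ζ ^ (l : ℕ) ≠ 1 := fun h =>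
      hkl (Fin.ext (hζ.pow_inj k.2 l.2 ((div_eq_one_iff_eq (pow_ne_zero _ hζ0)).1 h)))
    rw [geom_sum_eq hne, div_pow, pow_right_comm, hζ.pow_eq_one, pow_right_comm ζ l, hζ.pow_eq_one]
    simp

section Perturbation

open scoped Matrix Matrix.Norms.L2Operator

theorem conjTranspose_mul_self_nudftMatrix_equispaced (L : ℕ) (a b : ℝ) :
    (nudftMatrix (fun j : Fin L => (j - a) * (2 * π / L)) (fun k : Fin L => k - b))ᴴ *
      nudftMatrix (fun j : Fin L => (j - a) * (2 * π / L)) (fun k : Fin L => k - b) =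
    ((L : ℝ) : ℂ) • 1 := by
  ext k l
  set ζ := Complex.exp (2 * π * Complex.I / L) with hζ
  have term_eq (j : Fin L) :
      star (Complex.exp (-Complex.I * ((j - a) * (2 * π / L) : ℝ) * (k - b : ℝ))) *
        Complex.exp (-Complex.I * ((j - a) * (2 * π / L) : ℝ) * (l - b : ℝ)) =
      Complex.exp (2 * π * Complex.I / L * (a * (l - k))) *
        (ζ ^ (k : ℕ) / ζ ^ (l : ℕ)) ^ (j : ℕ) := by
    simp only [hζ, Complex.star_def, ← Complex.exp_conj, ← Complex.exp_nat_mul, ← Complex.exp_sub,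
      ← Complex.exp_add, map_mul, map_neg, Complex.conj_I, Complex.conj_ofReal]
    push_cast
    ring_nf
  simp only [Matrix.mul_apply, Matrix.conjTranspose_apply, nudftMatrix, Matrix.of_apply, term_eq]
  rw [← mul_sum, sum_div_pow_of_isPrimitiveRoot (Complex.isPrimitiveRoot_exp L k.pos.ne')]
  rcases eq_or_ne k l with rfl | hkl
  · simp
  · simp [hkl]

variable {m n : Type*} [Fintype m] [Fintype n] [DecidableEq n]

theorem norm_nudftMatrix_sub_le {x x' : m → ℝ} {y : n → ℝ} {h α : ℝ} (hh : 0 < h) (hα0 : 0 ≤ α)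
    (hα : α ≤ 1 / 4) (hx : ∀ j, |x' j - x j| ≤ α * h) (hy : ∀ k, |y k| * h ≤ π) :
    ‖nudftMatrix x' y - nudftMatrix x y‖ ≤ kadecConstant α * ‖nudftMatrix x y‖ := by
  have hadamard_eq : nudftMatrix x' y - nudftMatrix x y =
      Matrix.of (fun j k =>
        Complex.exp (((x j - x' j) / h : ℝ) * (y k * h : ℝ) * Complex.I) - 1) ⊙
        nudftMatrix x y := by
    ext j k
    simp only [nudftMatrix, Matrix.hadamard_apply, Matrix.of_apply, Matrix.sub_apply, sub_mul,
      one_mul, ← Complex.exp_add]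
    congr 2
    have : (h : ℂ) ≠ 0 := mod_cast hh.ne'
    push_cast
    field_simp
    ring
  rw [hadamard_eq]
  refine norm_exp_sub_one_hadamard_le hα0 hα (fun j => ?_) (fun k => ?_) _
  · rw [abs_div, abs_of_pos hh, div_le_iff₀ hh, abs_sub_comm]
    exact hx j
  · rw [abs_mul, abs_of_pos hh]
    exact hy k

variable {𝕜 : Type*} [RCLike 𝕜] {A B : Matrix m n 𝕜} {r φ : ℝ}

theorem norm_toLp_mulVec_of_conjTranspose_mul_self (hA : Aᴴ * A = (r : 𝕜) • 1) (v : n → 𝕜) :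
    ‖WithLp.toLp 2 (A *ᵥ v)‖ = √r * ‖WithLp.toLp 2 v‖ := by
  have inner_eq : inner 𝕜 (WithLp.toLp 2 (A *ᵥ v)) (WithLp.toLp 2 (A *ᵥ v)) =
      r * inner 𝕜 (WithLp.toLp 2 v) (WithLp.toLp 2 v) := by
    simp only [EuclideanSpace.inner_toLp_toLp]
    rw [dotProduct_comm, Matrix.star_mulVec, ← Matrix.dotProduct_mulVec, Matrix.mulVec_mulVec, hA,
      Matrix.smul_mulVec, Matrix.one_mulVec, dotProduct_smul, dotProduct_comm, smul_eq_mul]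
  have sq_eq : ‖WithLp.toLp 2 (A *ᵥ v)‖ ^ 2 = r * ‖WithLp.toLp 2 v‖ ^ 2 := by
    rw [inner_self_eq_norm_sq_to_K, inner_self_eq_norm_sq_to_K] at inner_eq
    exact_mod_cast inner_eq
  rw [← sqrt_sq (norm_nonneg (WithLp.toLp 2 (A *ᵥ v))), sq_eq, sqrt_mul' _ (sq_nonneg _),
    sqrt_sq (norm_nonneg _)]

theorem l2_opNorm_le_sqrt_of_conjTranspose_mul_self (hA : Aᴴ * A = (r : 𝕜) • 1) : ‖A‖ ≤ √r :=
  ContinuousLinearMap.opNorm_le_bound _ (sqrt_nonneg r) fun v =>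
    (norm_toLp_mulVec_of_conjTranspose_mul_self hA v.ofLp).le

theorem abs_norm_toLp_mulVec_sub_le (hA : Aᴴ * A = (r : 𝕜) • 1) (hφ : 0 ≤ φ)
    (hB : ‖B - A‖ ≤ φ * ‖A‖) (v : n → 𝕜) :
    |‖WithLp.toLp 2 (B *ᵥ v)‖ - √r * ‖WithLp.toLp 2 v‖| ≤ φ * (√r * ‖WithLp.toLp 2 v‖) := by
  calc |‖WithLp.toLp 2 (B *ᵥ v)‖ - √r * ‖WithLp.toLp 2 v‖|
      = |‖WithLp.toLp 2 (B *ᵥ v)‖ - ‖WithLp.toLp 2 (A *ᵥ v)‖| := by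
        rw [norm_toLp_mulVec_of_conjTranspose_mul_self hA]
    _ ≤ ‖WithLp.toLp 2 ((B - A) *ᵥ v)‖ := by
        rw [Matrix.sub_mulVec, WithLp.toLp_sub]
        exact abs_norm_sub_norm_le _ _
    _ ≤ ‖B - A‖ * ‖WithLp.toLp 2 v‖ := Matrix.l2_opNorm_mulVec (B - A) (WithLp.toLp 2 v)
    _ ≤ φ * √r * ‖WithLp.toLp 2 v‖ := by
        grw [hB, l2_opNorm_le_sqrt_of_conjTranspose_mul_self hA]
    _ = φ * (√r * ‖WithLp.toLp 2 v‖) := mul_assoc _ _ _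

theorem sq_bounds_of_abs_sub_le {b s φ : ℝ} (hs : 0 ≤ s) (hφ : φ ≤ 1) (h : |b - s| ≤ φ * s) :
    (1 - φ) ^ 2 * s ^ 2 ≤ b ^ 2 ∧ b ^ 2 ≤ (1 + φ) ^ 2 * s ^ 2 := by
  have hlower : 0 ≤ (1 - φ) * s := mul_nonneg (sub_nonneg.2 hφ) hs
  obtain ⟨hb_lower, hb_upper⟩ := abs_le.1 h
  rw [← mul_pow, ← mul_pow]
  exact ⟨pow_le_pow_left₀ hlower (by linarith) 2, pow_le_pow_left₀ (by linarith) (by linarith) 2⟩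

theorem nudft_frame_inequalities_general {L : ℕ} (hL : 0 < L) {α a b : ℝ} (hα : α ≤ 1 / 4)
    {x : Fin L → ℝ} (hx : ∀ j : Fin L, |x j - (j - a) * (2 * π / L)| ≤ α * (2 * π / L))
    (hb : ∀ k : Fin L, |k - b| ≤ L / 2) (c : Fin L → ℂ) :
    (1 - kadecConstant α) ^ 2 * ∑ k, ‖c k‖ ^ 2 ≤
        1 / L * ∑ j, ‖(nudftMatrix x (fun k : Fin L => k - b) *ᵥ c) j‖ ^ 2 ∧
    1 / L * ∑ j, ‖(nudftMatrix x (fun k : Fin L => k - b) *ᵥ c) j‖ ^ 2 ≤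
        (1 + kadecConstant α) ^ 2 * ∑ k, ‖c k‖ ^ 2 := by
  have hL' : (0 : ℝ) < L := mod_cast hL
  have hh : 0 < 2 * π / L := by positivity
  have hα0 : 0 ≤ α := nonneg_of_mul_nonneg_left ((abs_nonneg _).trans (hx ⟨0, hL⟩)) hh
  have hy (k : Fin L) : |k - b| * (2 * π / L) ≤ π :=
    calc |k - b| * (2 * π / L) ≤ L / 2 * (2 * π / L) := by
          gcongr
          exact hb k
      _ = π := by field_simp
  have perturbation := abs_norm_toLp_mulVec_sub_le (r := L)
    (conjTranspose_mul_self_nudftMatrix_equispaced L a b)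
    (kadecConstant_nonneg hα0 (by linarith)) (norm_nudftMatrix_sub_le hh hα0 hα hx hy) c
  obtain ⟨lower, upper⟩ := sq_bounds_of_abs_sub_le (by positivity)
    (kadecConstant_le_one hα0 hα) perturbation
  rw [mul_pow, sq_sqrt hL'.le, EuclideanSpace.norm_sq_eq, EuclideanSpace.norm_sq_eq,
    mul_left_comm] at lower upper
  rw [one_div_mul_eq_div, le_div_iff₀' hL', div_le_iff₀' hL']
  exact ⟨lower, upper⟩

end Perturbation

/-- discrete Kadec frame inequalities for the NUDFT matrix. -/
theorem nudft_frame_inequalities (N : ℕ) (hN : 0 < N) (α : ℝ) (hα0 : 0 ≤ α) (hα : α < 1/4)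
    (xt : Fin (2*N+1) → ℝ)
    (hxt : ∀ j, |xt j - (((j : ℕ) : ℝ) - (N : ℝ)) * (2*π/(2*N+1))| ≤ α * (2*π/(2*N+1)))
    (Ftil : Matrix (Fin (2*N+1)) (Fin (2*N+1)) ℂ)
    (hFtil : ∀ j k, Ftil j k =
      Complex.exp (-Complex.I * (xt j : ℂ) * (((k : ℕ) : ℂ) - (N : ℂ))))
    (c : Fin (2*N+1) → ℂ) :
    (1 - (1 - Real.cos (π*α) + Real.sin (π*α)))^2 * ∑ k, ‖c k‖^2 ≤
        (1/(2*(N:ℝ)+1)) * ∑ j, ‖Ftil.mulVec c j‖^2 ∧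
    (1/(2*(N:ℝ)+1)) * ∑ j, ‖Ftil.mulVec c j‖^2 ≤
        (1 + (1 - Real.cos (π*α) + Real.sin (π*α)))^2 * ∑ k, ‖c k‖^2 := by
  obtain rfl : Ftil = nudftMatrix xt fun k : Fin (2 * N + 1) => k - N := by
    ext j k
    simp [nudftMatrix, hFtil]
  have abs_freq_le (k : Fin (2 * N + 1)) : |(k : ℝ) - N| ≤ (2 * N + 1 : ℕ) / 2 := by
    have : (k : ℝ) ≤ 2 * N := mod_cast Nat.le_of_lt_succ k.2
    push_cast
    exact abs_le.2 ⟨by linarith [Nat.cast_nonneg (α := ℝ) k], by linarith⟩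
  simpa [kadecConstant] using
    nudft_frame_inequalities_general (2 * N).succ_pos hα.le (by simpa using hxt) abs_freq_le c
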